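/- arXiv:2212.00418 — 2 statements merged into one kernel-verified Lean document; each statement's English description precedes it below -/
import Mathlib

section
/- Let η ≥ 1 and k ≥ 1 be integers, let G be a finite simple graph, and let X ⊆ V(G) be an η-treedepth deletion set of G. Then there exists a set Z ⊆ V(G) ∖ X with |Z| ≤ η·(k+η)·|X|² such that, writing R = V(G) ∖ (X ∪ Z), the following two properties hold: (1) for every connected component C of the induced subgraph G[R], |N_G(C) ∩ Z| ≤ η; and (2) for every η-treedepth deletion set S of G with |S| ≤ k and every connected component C of G[R], |(N_G(C) ∩ X) ∖ S| ≤ η. -/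
open SimpleGraph Set

variable {V : Type*}

/-- The connected component of `x` inside the induced subgraph `G[S]`, as a subset of `V`. -/
def compIn (G : SimpleGraph V) (S : Set V) (x : V) : Set V :=
  {y | ∃ (hx : x ∈ S) (hy : y ∈ S), (G.induce S).Reachable ⟨x, hx⟩ ⟨y, hy⟩}

/-- `tdLE G n S` means that the treedepth of the induced subgraph `G[S]` is at most `n`,
following the recursive definition of treedepth: a graph has treedepth at most `n+1`
iff from every connected component one can delete a vertex leaving a graph of
treedepth at most `n`; only the empty graph has treedepth at most `0`. -/
def tdLE (G : SimpleGraph V) : ℕ → Set V → Prop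
  | 0, S => S = ∅
  | n+1, S => ∀ x ∈ S, ∃ v ∈ compIn G S x, tdLE G n (compIn G S x \ {v})

/-- The treedepth of the induced subgraph `G[S]`. -/
noncomputable def td (G : SimpleGraph V) (S : Set V) : ℕ :=
  sInf {n | tdLE G n S}

/-- `N_G(C)`: the set of vertices outside `C` having a neighbor in `C`. -/
def nbhd (G : SimpleGraph V) (C : Set V) : Set V :=
  {v | v ∉ C ∧ ∃ u ∈ C, G.Adj u v}

/-- `C` is a connected component of the induced subgraph `G[R]`. -/
def IsCompOf (G : SimpleGraph V) (R C : Set V) : Prop :=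
  ∃ x ∈ R, C = compIn G R x

/-- `S` is an `η`-treedepth deletion set of `G`: `td(G − S) ≤ η`. -/
def IsTDS (G : SimpleGraph V) (η : ℕ) (S : Set V) : Prop :=
  td G Sᶜ ≤ η

/-- `S` is a connected `η`-treedepth deletion set of `G`. -/
def IsCTDS (G : SimpleGraph V) (η : ℕ) (S : Set V) : Prop :=
  IsTDS G η S ∧ S.Nonempty ∧ (G.induce S).Connected

/-- A rooted forest with vertex set `A ⊆ V`, given by its (reflexive) ancestor relation:
`anc u v` means `u` is an ancestor of `v` (every vertex being an ancestor of itself). -/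
structure RootedForest (V : Type*) (A : Set V) where
  anc : V → V → Prop
  mem_left : ∀ {u v}, anc u v → u ∈ A
  mem_right : ∀ {u v}, anc u v → v ∈ A
  refl : ∀ v ∈ A, anc v v
  trans : ∀ {u v w}, anc u v → anc v w → anc u w
  antisymm : ∀ {u v}, anc u v → anc v u → u = v
  chain : ∀ {u w v}, anc u v → anc w v → anc u w ∨ anc w u

/-- Depth of a rooted forest: the maximum number of vertices on a root-to-leaf path,
i.e. the maximum number of ancestors of a vertex. -/
noncomputable def RootedForest.depth [Fintype V] {A : Set V} (F : RootedForest V A) : ℕ :=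
  Finset.univ.sup fun v : V => {u | F.anc u v}.ncard

/-- `F` is a treedepth decomposition of `G[A]`: the endpoints of every edge of `G[A]`
are in ancestor-descendant relation in `F`. -/
def IsTDDecompOn (G : SimpleGraph V) (A : Set V) (F : RootedForest V A) : Prop :=
  ∀ u v, u ∈ A → v ∈ A → G.Adj u v → F.anc u v ∨ F.anc v u

/-- `A` is an `(x,y)`-vertex cut in `G`: `A` avoids `x` and `y` and there is
no path from `x` to `y` in `G − A`. -/
def IsVertexCut (G : SimpleGraph V) (x y : V) (A : Set V) : Prop :=
  ∃ (hx : x ∈ Aᶜ) (hy : y ∈ Aᶜ), ¬ (G.induce Aᶜ).Reachable ⟨x, hx⟩ ⟨y, hy⟩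

/-- The weight of a subgraph: the sum of the weights of its edges. -/
noncomputable def subWeight (w : Sym2 V → ℕ) {G : SimpleGraph V} (T : G.Subgraph) : ℕ :=
  ∑ᶠ e ∈ T.edgeSet, w e

/-- The leaves (vertices with exactly one neighbor) of a subgraph. -/
def subLeaves {G : SimpleGraph V} (T : G.Subgraph) : Set V :=
  {v | (T.neighborSet v).ncard = 1}

/-- `T` is a Steiner tree for the terminal set `R` in `G`. -/
def IsSteinerTree (G : SimpleGraph V) (R : Set V) (T : G.Subgraph) : Prop :=
  T.coe.IsTree ∧ R ⊆ T.verts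

/-- `T` is a `t`-component for `R`: a tree with at most `t` leaves, all of which lie in `R`. -/
def IsTComponent (G : SimpleGraph V) (R : Set V) (t : ℕ) (T : G.Subgraph) : Prop :=
  T.coe.IsTree ∧ (subLeaves T).ncard ≤ t ∧ subLeaves T ⊆ R

lemma compIn_mem_left {G : SimpleGraph V} {S : Set V} {x y : V} (h : y ∈ compIn G S x) :
    x ∈ S := h.1

lemma compIn_sub {G : SimpleGraph V} {S : Set V} {x : V} : compIn G S x ⊆ S :=
  fun _ h => h.2.1

lemma compIn_refl {G : SimpleGraph V} {S : Set V} {x : V} (h : x ∈ S) : x ∈ compIn G S x :=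
  ⟨h, h, Reachable.refl _⟩

lemma compIn_symm {G : SimpleGraph V} {S : Set V} {x y : V} (h : y ∈ compIn G S x) :
    x ∈ compIn G S y := by
  obtain ⟨h1, h2, h3⟩ := h
  exact ⟨h2, h1, h3.symm⟩

lemma compIn_trans {G : SimpleGraph V} {S : Set V} {x y z : V} (h : y ∈ compIn G S x)
    (h' : z ∈ compIn G S y) : z ∈ compIn G S x := by
  obtain ⟨h1, h2, h3⟩ := h
  obtain ⟨h1', h2', h3'⟩ := h'
  exact ⟨h1, h2', h3.trans h3'⟩

lemma compIn_eq {G : SimpleGraph V} {S : Set V} {x y : V} (h : y ∈ compIn G S x) :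
    compIn G S y = compIn G S x := by
  ext z
  exact ⟨fun hz => compIn_trans h hz, fun hz => compIn_trans (compIn_symm h) hz⟩

lemma compIn_mono {G : SimpleGraph V} {S T : Set V} (hST : S ⊆ T) (x : V) :
    compIn G S x ⊆ compIn G T x := by
  rintro y ⟨h1, h2, h3⟩
  exact ⟨hST h1, hST h2, h3.map (G.induceHomOfLE hST).toHom⟩

lemma compIn_adj {G : SimpleGraph V} {S : Set V} {x y : V} (hx : x ∈ S) (hy : y ∈ S)
    (h : G.Adj x y) : y ∈ compIn G S x :=
  ⟨hx, hy, Adj.reachable (by simpa using h)⟩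

lemma compIn_self {G : SimpleGraph V} {S : Set V} {x y : V} (h : y ∈ compIn G S x) :
    y ∈ compIn G (compIn G S x) x := by
  obtain ⟨h1, h2, ⟨w⟩⟩ := h
  have key : ∀ (a b : S) (w : (G.induce S).Walk a b), (a : V) ∈ compIn G S x →
      (b : V) ∈ compIn G (compIn G S x) a := by
    intro a b w
    induction w with
    | nil => exact fun h => compIn_refl h
    | cons hadj w ih =>
      rename_i u v w'
      intro hu
      have hv : (v : V) ∈ compIn G S x := compIn_trans hu (compIn_adj u.2 v.2 (by simpa using hadj))
      exact compIn_trans (compIn_adj hu hv (by simpa using hadj)) (ih hv)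
  exact key _ _ w (compIn_refl h1)

lemma tdLE_succ {G : SimpleGraph V} (n : ℕ) : ∀ S, tdLE G n S → tdLE G (n+1) S := by
  induction n with
  | zero => intro S h x hx; rw [tdLE] at h; simp [h] at hx
  | succ n ih =>
    intro S h x hx
    obtain ⟨v, hv, h'⟩ := h x hx
    exact ⟨v, hv, ih _ h'⟩

lemma tdLE_mono {G : SimpleGraph V} {m n : ℕ} (hmn : m ≤ n) {S : Set V} (h : tdLE G m S) :
    tdLE G n S := by
  induction hmn with
  | refl => exact h
  | step _ ih => exact tdLE_succ _ _ ih

lemma tdLE_card [Finite V] {G : SimpleGraph V} (n : ℕ) : ∀ S : Set V, S.ncard ≤ n → tdLE G n S := by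
  induction n with
  | zero => intro S h; rw [tdLE]; exact (Set.ncard_eq_zero (Set.toFinite _)).1 (by omega)
  | succ n ih =>
    intro S h x hx
    refine ⟨x, compIn_refl hx, ih _ ?_⟩
    have h1 := Set.ncard_diff_singleton_lt_of_mem (compIn_refl (G := G) hx) (Set.toFinite _)
    have h2 := Set.ncard_le_ncard (compIn_sub (G := G) (S := S) (x := x)) (Set.toFinite _)
    omega

lemma tdLE_of_td [Finite V] {G : SimpleGraph V} {n : ℕ} {S : Set V} (h : td G S ≤ n) :
    tdLE G n S := by
  have : tdLE G (td G S) S := Nat.sInf_mem (s := {n | tdLE G n S}) ⟨S.ncard, tdLE_card _ _ le_rfl⟩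
  exact tdLE_mono h this

/-- Among more than `n` vertices of a graph of treedepth at most `n`, two have a small cut. -/
lemma exists_cut [Finite V] {G : SimpleGraph V} (n : ℕ) : ∀ A Q : Set V, tdLE G n A → Q ⊆ A →
    n < Q.ncard → ∃ x ∈ Q, ∃ y ∈ Q, ∃ B : Set V, B.ncard ≤ n ∧ x ∉ B ∧ y ∉ B ∧
      y ∉ compIn G (A \ B) x := by
  induction n with
  | zero =>
    intro A Q h hQ hc
    rw [tdLE] at h
    subst h
    rw [Set.subset_empty_iff.1 hQ] at hc
    simp at hc
  | succ n ih =>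
    intro A Q h hQ hc
    have hne : Q.Nonempty := by
      rw [← Set.ncard_pos]; omega
    obtain ⟨x, hx⟩ := hne
    by_cases hK : Q ⊆ compIn G A x
    · obtain ⟨v, hv, hv'⟩ := h x (hQ hx)
      have hc' : n < (Q \ {v}).ncard := by
        have := Set.le_ncard_sdiff {v} Q (Set.toFinite _)
        simp at this
        omega
      obtain ⟨a, ha, b, hb, B, hB, haB, hbB, hab⟩ :=
        ih _ (Q \ {v}) hv' (Set.diff_subset_diff_left hK) hc'
      refine ⟨a, ha.1, b, hb.1, insert v B, (Set.ncard_insert_le _ _).trans (by omega), ?_, ?_, ?_⟩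
      · rintro (h | h)
        · exact ha.2 h
        · exact haB h
      · rintro (h | h)
        · exact hb.2 h
        · exact hbB h
      · intro hcon
        apply hab
        have h1 := compIn_self hcon
        refine compIn_mono ?_ a h1
        intro z hz
        have hzA : z ∈ compIn G A x := compIn_trans (hK ha.1) (compIn_mono Set.diff_subset a hz)
        have hz2 := (compIn_sub hz).2
        refine ⟨⟨hzA, fun h => hz2 (Or.inl h)⟩, fun h => hz2 (Or.inr h)⟩
    · obtain ⟨y, hy, hy'⟩ := Set.not_subset.1 hK
      exact ⟨x, hx, y, hy, ∅, by simp, by simp, by simp, by simpa using hy'⟩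

/-- Ancestor sets of a treedepth decomposition. -/
lemma exists_anc [Finite V] {G : SimpleGraph V} (n : ℕ) : ∀ A : Set V, tdLE G n A →
    ∃ P : V → Set V, (∀ v ∈ A, v ∈ P v) ∧ (∀ v ∈ A, P v ⊆ A) ∧ (∀ v ∈ A, (P v).ncard ≤ n) ∧
      (∀ v ∈ A, ∀ u ∈ P v, P u ⊆ P v) ∧
      (∀ D : Set V, D ⊆ A → (∀ a ∈ D, ∀ b ∈ D, b ∈ compIn G D a) →
        ∃ T : Set V, T.ncard ≤ n ∧ ∀ z ∈ A, z ∈ nbhd G D → z ∈ T ∨ (P z ∩ D).Nonempty) := by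
  classical
  induction n with
  | zero =>
    intro A h
    rw [tdLE] at h
    subst h
    refine ⟨fun _ => ∅, by simp, by simp, by simp, by simp, fun D _ _ => ⟨∅, by simp, by simp⟩⟩
  | succ n ih =>
    intro A h
    rcases A.eq_empty_or_nonempty with rfl | hA
    · refine ⟨fun _ => ∅, by simp, by simp, by simp, by simp, fun D _ _ => ⟨∅, by simp, by simp⟩⟩
    have h' : ∀ K : Set V, ∃ (r : V) (P : V → Set V), (∃ x ∈ A, K = compIn G A x) →
        r ∈ K ∧ (∀ v ∈ K \ {r}, v ∈ P v) ∧ (∀ v ∈ K \ {r}, P v ⊆ K \ {r}) ∧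
        (∀ v ∈ K \ {r}, (P v).ncard ≤ n) ∧
        (∀ v ∈ K \ {r}, ∀ u ∈ P v, P u ⊆ P v) ∧
        (∀ D : Set V, D ⊆ K \ {r} → (∀ a ∈ D, ∀ b ∈ D, b ∈ compIn G D a) →
          ∃ T : Set V, T.ncard ≤ n ∧ ∀ z ∈ K \ {r}, z ∈ nbhd G D →
            z ∈ T ∨ (P z ∩ D).Nonempty) := by
      intro K
      by_cases hK : ∃ x ∈ A, K = compIn G A x
      · obtain ⟨x, hx, rfl⟩ := hK
        obtain ⟨v, hv, hv'⟩ := h x hx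
        obtain ⟨P, hP⟩ := ih _ hv'
        exact ⟨v, P, fun _ => ⟨hv, hP⟩⟩
      · exact ⟨hA.some, fun _ => ∅, fun h => absurd h hK⟩
    choose r P hP using h'
    have hP' := fun x (hx : x ∈ A) => hP (compIn G A x) ⟨x, hx, rfl⟩
    let P' : V → Set V := fun v => insert (r (compIn G A v))
      (if v = r (compIn G A v) then ∅ else P (compIn G A v) v)
    have hP'1 : ∀ v, v = r (compIn G A v) → P' v = {v} := by
      intro v hv
      simp only [P']
      rw [if_pos hv, ← hv]
      simp
    have hP'2 : ∀ v, v ≠ r (compIn G A v) →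
        P' v = insert (r (compIn G A v)) (P (compIn G A v) v) := by
      intro v hv
      simp only [P']
      rw [if_neg hv]
    have hK : ∀ v ∈ A, P' v ⊆ compIn G A v := by
      intro v hv
      by_cases hr : v = r (compIn G A v)
      · rw [hP'1 v hr]
        simpa using compIn_refl hv
      · rw [hP'2 v hr]
        have := hP' v hv
        exact Set.insert_subset this.1 ((this.2.2.1 v ⟨compIn_refl hv, hr⟩).trans Set.diff_subset)
    refine ⟨P', ?_, ?_, ?_, ?_, ?_⟩
    · intro v hv
      by_cases hr : v = r (compIn G A v)
      · rw [hP'1 v hr]; simp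
      · rw [hP'2 v hr]
        exact Or.inr ((hP' v hv).2.1 v ⟨compIn_refl hv, hr⟩)
    · exact fun v hv => (hK v hv).trans compIn_sub
    · intro v hv
      by_cases hr : v = r (compIn G A v)
      · rw [hP'1 v hr]; simp
      · rw [hP'2 v hr]
        have := (hP' v hv).2.2.2.1 v ⟨compIn_refl hv, hr⟩
        exact (Set.ncard_insert_le _ _).trans (by omega)
    · intro v hv u hu
      have hKu := compIn_eq (hK v hv hu)
      by_cases hr : u = r (compIn G A u)
      · rw [hP'1 u hr]; simpa using hu
      · rw [hP'2 u hr, hKu]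
        rw [hKu] at hr
        by_cases hr2 : v = r (compIn G A v)
        · rw [hP'1 v hr2] at hu
          have : u = v := hu
          subst this
          exact absurd hr2 hr
        · rw [hP'2 v hr2] at hu ⊢
          rcases hu with hu | hu
          · exact absurd hu hr
          · exact Set.insert_subset_insert
              ((hP' v hv).2.2.2.2.1 v ⟨compIn_refl hv, hr2⟩ u hu)
    · intro D hDA hD
      rcases D.eq_empty_or_nonempty with rfl | ⟨d, hd⟩
      · exact ⟨∅, by simp, by simp [nbhd]⟩
      have hDK : D ⊆ compIn G A d := fun b hb => compIn_mono hDA d (hD d hd b hb)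
      have hzK : ∀ z ∈ A, z ∈ nbhd G D → z ∈ compIn G A d := by
        rintro z hz ⟨_, u, hu, huz⟩
        exact compIn_trans (hDK hu) (compIn_adj (hDA hu) hz huz)
      by_cases hr : r (compIn G A d) ∈ D
      · refine ⟨∅, by simp, fun z hz hzD => Or.inr ⟨_, ?_, hr⟩⟩
        rw [← compIn_eq (hzK z hz hzD)]
        exact Or.inl rfl
      · obtain ⟨T, hT, hT'⟩ := (hP' d (hDA hd)).2.2.2.2.2 D
          (fun b hb => ⟨hDK hb, fun h => hr (by
            have h : b = _ := h
            rwa [← h])⟩) hD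
        refine ⟨insert (r (compIn G A d)) T, (Set.ncard_insert_le _ _).trans (by omega), ?_⟩
        intro z hz hzD
        have hzK' := hzK z hz hzD
        by_cases hzr : z = r (compIn G A d)
        · exact Or.inl (Or.inl hzr)
        rcases hT' z ⟨hzK', hzr⟩ hzD with h | ⟨w, hw, hwD⟩
        · exact Or.inl (Or.inr h)
        · refine Or.inr ⟨w, ?_, hwD⟩
          have := compIn_eq hzK'
          rw [hP'2 z (by rwa [this]), this]
          exact Or.inr hw

lemma ncard_iUnion_le {α β : Type*} [Finite α] [Finite β] (s : Set α) (f : α → Set β) (n : ℕ)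
    (h : ∀ a ∈ s, (f a).ncard ≤ n) : (⋃ a ∈ s, f a).ncard ≤ s.ncard * n := by
  classical
  have hs : s.Finite := Set.toFinite s
  induction s, hs using Set.Finite.induction_on with
  | empty => simp
  | @insert a s ha hs ih =>
    rw [Set.biUnion_insert, Set.ncard_insert_of_notMem ha hs]
    have h1 := Set.ncard_union_le (f a) (⋃ a ∈ s, f a)
    have h2 := ih (fun b hb => h b (Or.inr hb))
    have h3 := h a (Or.inl rfl)
    rw [Nat.add_mul]
    omega

/-- given an `η`-treedepth deletion set `X`, there is a set
`Z ⊆ V(G) ∖ X` of size at most `η·(k+η)·|X|²` such that, with `R = V(G) ∖ (X ∪ Z)`,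
every connected component `C` of `G[R]` has at most `η` neighbors in `Z`, and every
`η`-treedepth deletion set `S` of size at most `k` misses at most `η` vertices of
`N_G(C) ∩ X`. -/
theorem stmt1 {V : Type*} [Fintype V] (η k : ℕ) (hη : 1 ≤ η) (hk : 1 ≤ k)
    (G : SimpleGraph V) (X : Set V) (hX : IsTDS G η X) :
    ∃ Z : Set V, Z ⊆ Xᶜ ∧ Z.ncard ≤ η * (k + η) * X.ncard ^ 2 ∧
      (∀ C, IsCompOf G (X ∪ Z)ᶜ C → (nbhd G C ∩ Z).ncard ≤ η) ∧
      (∀ S, IsTDS G η S → S.ncard ≤ k →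
        ∀ C, IsCompOf G (X ∪ Z)ᶜ C → ((nbhd G C ∩ X) \ S).ncard ≤ η) := by 
  classical
  have hX' : tdLE G η Xᶜ := tdLE_of_td hX
  obtain ⟨P, hP1, hP2, hP3, hP4, hP5⟩ := exists_anc η Xᶜ hX'
  let good : V × V → Set V → Prop := fun p B => B ⊆ Xᶜ ∧ B.ncard ≤ k + η ∧
    p.2 ∉ compIn G ((Xᶜ \ B) ∪ {p.1, p.2}) p.1
  have hcut : ∀ p : V × V, ∃ B : Set V, B ⊆ Xᶜ ∧ B.ncard ≤ k + η ∧
      ((∃ B', good p B') → good p B) := by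
    intro p
    by_cases h : ∃ B', good p B'
    · obtain ⟨B, hB⟩ := h
      exact ⟨B, hB.1, hB.2.1, fun _ => hB⟩
    · exact ⟨∅, by simp, by simp, fun h' => absurd h' h⟩
  choose B hB1 hB2 hB3 using hcut
  let W : Set V := ⋃ p ∈ X ×ˢ X, B p
  let Z : Set V := ⋃ w ∈ W, P w
  have hWX : W ⊆ Xᶜ := Set.iUnion₂_subset fun p _ => hB1 p
  have hWZ : W ⊆ Z := fun w hw => Set.mem_biUnion hw (hP1 w (hWX hw))
  have hZX : Z ⊆ Xᶜ := Set.iUnion₂_subset fun w hw => hP2 w (hWX hw)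
  have hW : W.ncard ≤ X.ncard ^ 2 * (k + η) := by
    have := ncard_iUnion_le (X ×ˢ X) B (k + η) (fun p _ => hB2 p)
    rwa [Set.ncard_prod, ← sq] at this
  have hZ : Z.ncard ≤ W.ncard * η := ncard_iUnion_le W P η (fun w hw => hP3 w (hWX hw))
  have hCD : ∀ C, IsCompOf G (X ∪ Z)ᶜ C → ∀ a ∈ C, ∀ b ∈ C, b ∈ compIn G C a := by
    rintro C ⟨x, hx, rfl⟩ a ha b hb
    exact compIn_trans (compIn_symm (compIn_self ha)) (compIn_self hb)
  have hCsub : ∀ C, IsCompOf G (X ∪ Z)ᶜ C → C ⊆ (X ∪ Z)ᶜ := by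
    rintro C ⟨x, hx, rfl⟩
    exact compIn_sub
  refine ⟨Z, hZX, ?_, ?_, ?_⟩
  · calc Z.ncard ≤ W.ncard * η := hZ
      _ ≤ (X.ncard ^ 2 * (k + η)) * η := Nat.mul_le_mul_right _ hW
      _ = _ := by ring
  · intro C hC
    obtain ⟨T, hT, hT'⟩ := hP5 C (fun c hc h => hCsub C hC hc (Or.inl h)) (hCD C hC)
    refine (Set.ncard_le_ncard ?_ (Set.toFinite T)).trans hT
    rintro z ⟨hzN, hzZ⟩
    rcases hT' z (hZX hzZ) hzN with h | ⟨c, hcP, hcC⟩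
    · exact h
    · exfalso
      apply hCsub C hC hcC
      obtain ⟨w, hw, hzw⟩ := Set.mem_iUnion₂.1 hzZ
      exact Or.inr (Set.mem_biUnion hw (hP4 w (hWX hw) z hzw hcP))
  · intro S hS hSk C hC
    by_contra hcon
    obtain ⟨x, hx, y, hy, A, hA, hxA, hyA, hxy⟩ := exists_cut η Sᶜ ((nbhd G C ∩ X) \ S)
      (tdLE_of_td hS) (fun z hz => hz.2) (not_le.1 hcon)
    have hg : good (x, y) ((S ∪ A) ∩ Xᶜ) := by
      refine ⟨Set.inter_subset_right, ?_, ?_⟩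
      · refine (Set.ncard_le_ncard Set.inter_subset_left (Set.toFinite _)).trans ?_
        exact (Set.ncard_union_le _ _).trans (by omega)
      · intro h
        refine hxy (compIn_mono ?_ x h)
        rintro z (⟨hz1, hz2⟩ | hz | hz)
        · exact ⟨fun h => hz2 ⟨Or.inl h, hz1⟩, fun h => hz2 ⟨Or.inr h, hz1⟩⟩
        · have hz : z = x := hz
          rw [hz]
          exact ⟨hx.2, hxA⟩
        · have hz : z = y := hz
          rw [hz]
          exact ⟨hy.2, hyA⟩
    have hg' := hB3 (x, y) ⟨_, hg⟩
    apply hg'.2.2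
    have hBZ : B (x, y) ⊆ Z := by
      refine Set.Subset.trans ?_ hWZ
      exact Set.subset_biUnion_of_mem (u := B) (show (x, y) ∈ X ×ˢ X from ⟨hx.1.2, hy.1.2⟩)
    have hCs : C ⊆ (Xᶜ \ B (x, y)) ∪ {x, y} := fun c hc =>
      Or.inl ⟨fun h => hCsub C hC hc (Or.inl h), fun h => hCsub C hC hc (Or.inr (hBZ h))⟩
    obtain ⟨-, a, haC, hax⟩ := hx.1.1
    obtain ⟨-, b, hbC, hby⟩ := hy.1.1
    have h1 : a ∈ compIn G ((Xᶜ \ B (x, y)) ∪ {x, y}) x :=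
      compIn_adj (Or.inr (Or.inl rfl)) (hCs haC) hax.symm
    have h2 := compIn_mono hCs a (hCD C hC a haC b hbC)
    have h3 : y ∈ compIn G ((Xᶜ \ B (x, y)) ∪ {x, y}) b :=
      compIn_adj (hCs hbC) (Or.inr (Or.inr rfl)) hby
    exact compIn_trans (compIn_trans h1 h2) h3
end

section
/- Let η ≥ 1, λ ≥ 0, and i ≤ η be integers, let G be a finite simple graph, let H ⊆ V(G), and let T ⊆ V(G) ∖ H. Let C₁, …, C_ℓ be pairwise disjoint subsets of V(G) ∖ (T ∪ H) with ℓ ≥ λ + η + 2 such that for every j ∈ [ℓ]: G[C_j] is connected, N_G(C_j) ∖ H = T, and td(G[C_j]) = i. Let M = C_{λ+η+2} ∪ ⋯ ∪ C_ℓ (the union of all but λ + η + 1 of the sets). Let S be an η-treedepth deletion set of G − M with H ⊆ S, and suppose that either T ⊆ S or |S ∩ (C₁ ∪ ⋯ ∪ C_{λ+η+1})| ≤ λ. Then S is an η-treedepth deletion set of G. -/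
open SimpleGraph Set

variable {V : Type*}

theorem aux_mem_compIn (G : SimpleGraph V) (S : Set V) (x y : V) :
    y ∈ compIn G S x ↔ x ∈ S ∧ Relation.ReflTransGen (fun a b => G.Adj a b ∧ b ∈ S) x y := by
  constructor
  · rintro ⟨hx, hy, h⟩
    refine ⟨hx, ?_⟩
    rw [SimpleGraph.reachable_iff_reflTransGen] at h
    exact Relation.ReflTransGen.lift (p := fun a b => G.Adj a b ∧ b ∈ S)
      (Subtype.val : S → V) (fun a b hab => ⟨hab, b.2⟩) _ _ h
  · rintro ⟨hx, h⟩
    induction h with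
    | refl => exact ⟨hx, hx, SimpleGraph.Reachable.refl _⟩
    | tail _ hbc ih =>
      obtain ⟨_, hb, hr⟩ := ih
      refine ⟨hx, hbc.2, hr.trans (SimpleGraph.Adj.reachable ?_)⟩
      exact hbc.1

theorem aux_comp_sub (G : SimpleGraph V) (S : Set V) (x : V) : compIn G S x ⊆ S :=
  fun _ h => h.2.1

theorem aux_comp_self (G : SimpleGraph V) {S : Set V} {x : V} (hx : x ∈ S) : x ∈ compIn G S x :=
  ⟨hx, hx, SimpleGraph.Reachable.refl _⟩

theorem aux_comp_closed (G : SimpleGraph V) {S : Set V} {x y z : V} (hy : y ∈ compIn G S x)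
    (hz : z ∈ S) (h : G.Adj y z) : z ∈ compIn G S x := by
  rw [aux_mem_compIn] at hy ⊢
  exact ⟨hy.1, hy.2.tail ⟨h, hz⟩⟩

theorem aux_comp_mono (G : SimpleGraph V) {S S' : Set V} (h : S' ⊆ S) (x : V) :
    compIn G S' x ⊆ compIn G S x := by
  intro y hy
  rw [aux_mem_compIn] at hy ⊢
  exact ⟨h hy.1, Relation.ReflTransGen.mono (fun a b hab => ⟨hab.1, h hab.2⟩) _ _ hy.2⟩

theorem aux_comp_le (G : SimpleGraph V) {S A : Set V} {x : V} (hx : x ∈ A)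
    (hA : ∀ u ∈ A, ∀ w ∈ S, G.Adj u w → w ∈ A) : compIn G S x ⊆ compIn G A x := by
  intro y hy
  rw [aux_mem_compIn] at hy
  obtain ⟨_, h⟩ := hy
  induction h with
  | refl => exact aux_comp_self G hx
  | tail _ hbc ih =>
    exact aux_comp_closed G ih (hA _ (aux_comp_sub G A x ih) _ hbc.2 hbc.1) hbc.1

theorem aux_mono (G : SimpleGraph V) (n : ℕ) : ∀ {S S' : Set V}, S' ⊆ S → tdLE G n S →
    tdLE G n S' := by
  induction n with
  | zero =>
    intro S S' h hS
    simp only [tdLE] at hS ⊢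
    exact Set.subset_empty_iff.1 (hS ▸ h)
  | succ n ih =>
    intro S S' h hS x hx
    obtain ⟨v, hv, hv'⟩ := hS x (h hx)
    have hm := aux_comp_mono G h x
    by_cases hvx : v ∈ compIn G S' x
    · exact ⟨v, hvx, ih (Set.diff_subset_diff_left hm) hv'⟩
    · refine ⟨x, aux_comp_self G hx, ih ?_ hv'⟩
      rintro y ⟨hy, _⟩
      exact ⟨hm hy, fun h => hvx (h ▸ hy)⟩

theorem aux_add (G : SimpleGraph V) {n : ℕ} {S : Set V} {v : V} (h : tdLE G n (S \ {v})) :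
    tdLE G (n+1) S := by
  intro x hx
  have hm := aux_comp_sub G S x
  by_cases hvx : v ∈ compIn G S x
  · exact ⟨v, hvx, aux_mono G n (Set.diff_subset_diff_left hm) h⟩
  · refine ⟨x, aux_comp_self G hx, aux_mono G n ?_ h⟩
    rintro y ⟨hy, _⟩
    exact ⟨hm hy, fun h => hvx (h ▸ hy)⟩

theorem aux_succ (G : SimpleGraph V) {n : ℕ} {S : Set V} (h : tdLE G n S) :
    tdLE G (n+1) S := by
  intro x hx
  exact ⟨x, aux_comp_self G hx, aux_mono G n (Set.diff_subset.trans (aux_comp_sub G S x)) h⟩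

theorem aux_le (G : SimpleGraph V) {m n : ℕ} (hmn : m ≤ n) {S : Set V} (h : tdLE G m S) :
    tdLE G n S := by
  induction hmn with
  | refl => exact h
  | step _ ih => exact aux_succ G ih

theorem aux_exists [Finite V] (G : SimpleGraph V) (S : Set V) : ∃ n, tdLE G n S := by
  induction S, S.toFinite using Set.Finite.induction_on with
  | empty => exact ⟨0, rfl⟩
  | @insert a s ha _ ih =>
    obtain ⟨n, hn⟩ := ih
    refine ⟨n+1, aux_add G (v := a) (aux_mono G n ?_ hn)⟩
    rintro y ⟨hy | hy, hy'⟩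
    · exact absurd hy hy'
    · exact hy

theorem aux_td_le [Finite V] (G : SimpleGraph V) (S : Set V) (n : ℕ) :
    td G S ≤ n ↔ tdLE G n S := by
  constructor
  · intro h
    exact aux_le G h (Nat.sInf_mem (s := {n | tdLE G n S}) (aux_exists G S))
  · intro h
    exact Nat.sInf_le h

/-- If every vertex lies in a closed part of small treedepth, the whole has small treedepth. -/
theorem aux_cover (G : SimpleGraph V) (n : ℕ) (S : Set V)
    (h : ∀ x ∈ S, ∃ A : Set V, x ∈ A ∧ (∀ u ∈ A, ∀ w ∈ S, G.Adj u w → w ∈ A) ∧ tdLE G n A) :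
    tdLE G n S := by
  cases n with
  | zero =>
    simp only [tdLE] at h ⊢
    refine Set.eq_empty_of_forall_notMem fun x hx => ?_
    obtain ⟨A, hxA, _, hA⟩ := h x hx
    rw [hA] at hxA
    exact hxA
  | succ n =>
    intro x hx
    obtain ⟨A, hxA, hcl, hA⟩ := h x hx
    have hle := aux_comp_le G hxA hcl
    have := aux_mono G (n+1) (S' := compIn G S x) (hle.trans (aux_comp_sub G A x)) hA
    obtain ⟨v, hv, hv'⟩ := this x (aux_comp_self G hx)
    have hsub : compIn G S x ⊆ compIn G (compIn G S x) x :=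
      aux_comp_le G (aux_comp_self G hx) fun u hu w hw => aux_comp_closed G hu hw
    exact ⟨v, aux_comp_sub _ _ _ hv, aux_mono G n (Set.diff_subset_diff_left hsub) hv'⟩

theorem aux_sep (G : SimpleGraph V) (n : ℕ) (R : Set V) (D : ℕ → Set V) (L : Set ℕ)
    (hR : tdLE G n R) (hD : ∀ m ∈ L, tdLE G n (D m))
    (hcl : ∀ m ∈ L, ∀ u ∈ D m, ∀ w ∈ R ∪ ⋃ m ∈ L, D m, G.Adj u w → w ∈ D m) :
    tdLE G n (R ∪ ⋃ m ∈ L, D m) := by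
  apply aux_cover
  intro x hx
  by_cases hxM : x ∈ ⋃ m ∈ L, D m
  · simp only [Set.mem_iUnion] at hxM
    obtain ⟨m, hm, hxm⟩ := hxM
    exact ⟨D m, hxm, hcl m hm, hD m hm⟩
  · refine ⟨R \ ⋃ m ∈ L, D m, ⟨hx.resolve_right hxM, hxM⟩, ?_, aux_mono G n Set.diff_subset hR⟩
    rintro u ⟨hu, huM⟩ w hw huw
    have hwM : w ∉ ⋃ m ∈ L, D m := by
      intro hwM
      simp only [Set.mem_iUnion] at hwM
      obtain ⟨m, hm, hwm⟩ := hwM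
      exact huM (Set.mem_biUnion hm (hcl m hm w hwm u (Or.inl hu) huw.symm))
    exact ⟨hw.resolve_right hwM, hwM⟩

theorem aux_main (G : SimpleGraph V) (D : ℕ → Set V) (L : Set ℕ) (n : ℕ) :
    ∀ (R T : Set V) (J : Finset ℕ), n + 1 ≤ J.card → T ⊆ R →
    (∀ t ∈ T, t ∉ ⋃ m ∈ L, D m) →
    (∀ j ∈ J, D j ⊆ R) → (∀ j ∈ J, (G.induce (D j)).Connected) →
    (∀ j ∈ J, ∀ j' ∈ J, j ≠ j' → Disjoint (D j) (D j')) →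
    (∀ j ∈ J, ∀ t ∈ T, ∃ u ∈ D j, G.Adj u t) →
    (∀ j ∈ J, ∀ m ∈ L, ∀ p, tdLE G p (D j) → tdLE G p (D m)) →
    (∀ m ∈ L, ∀ u ∈ D m, ∀ w ∈ R ∪ ⋃ m ∈ L, D m, G.Adj u w → w ∈ D m ∨ w ∈ T) →
    tdLE G n R → tdLE G n (R ∪ ⋃ m ∈ L, D m) := by
  classical
  induction n with
  | zero =>
    intro R T J hJ _ _ hJR hconn _ _ _ _ hR
    obtain ⟨j, hj⟩ := Finset.card_pos.1 (by omega : 0 < J.card)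
    obtain ⟨⟨x, hx⟩⟩ := (hconn j hj).nonempty
    have := hJR j hj hx
    simp only [tdLE] at hR
    rw [hR] at this
    exact this.elim
  | succ n ih =>
    intro R T J hJ hTR hTM hJR hconn hdisj hadj hle hcl hR
    rcases T.eq_empty_or_nonempty with rfl | ⟨t, ht⟩
    · obtain ⟨j, hj⟩ := Finset.card_pos.1 (by omega : 0 < J.card)
      refine aux_sep G _ R D L hR (fun m hm => hle j hj m hm _ (aux_mono G _ (hJR j hj) hR)) ?_
      intro m hm u hu w hw huw
      exact (hcl m hm u hu w hw huw).resolve_right (Set.notMem_empty _)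
    · set K := compIn G R t with hK
      have hKR : K ⊆ R := aux_comp_sub G R t
      have hJK : ∀ j ∈ J, D j ⊆ K := by
        intro j hj y hy
        obtain ⟨u, hu, hut⟩ := hadj j hj t ht
        have huK : u ∈ K := aux_comp_closed G (aux_comp_self G (hTR ht)) (hJR j hj hu) hut.symm
        have hy' : y ∈ compIn G (D j) u := ⟨hu, hy, (hconn j hj).preconnected _ _⟩
        have := aux_comp_mono G (hJR j hj) u hy'
        rw [hK, aux_mem_compIn] at huK ⊢
        rw [aux_mem_compIn] at this
        exact ⟨huK.1, huK.2.trans this.2⟩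
      have hTK : T ⊆ K := by
        intro s hs
        obtain ⟨j, hj⟩ := Finset.card_pos.1 (by omega : 0 < J.card)
        obtain ⟨u, hu, hus⟩ := hadj j hj s hs
        exact aux_comp_closed G (hJK j hj hu) (hTR hs) hus
      obtain ⟨v, hv, hv'⟩ := hR t (hTR ht)
      have hKM : tdLE G (n+1) (K ∪ ⋃ m ∈ L, D m) := by
        apply aux_add G (v := v)
        have hcard : n + 1 ≤ (J.filter fun j => v ∉ D j).card := by
          have h1 := Finset.card_filter_add_card_filter_not (s := J) (fun j => v ∈ D j)
          have h2 : (J.filter fun j => v ∈ D j).card ≤ 1 := by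
            rw [Finset.card_le_one]
            intro a ha b hb
            rw [Finset.mem_filter] at ha hb
            by_contra hab
            exact Set.disjoint_left.1 (hdisj a ha.1 b hb.1 hab) ha.2 hb.2
          omega
        refine aux_mono G n ?_ (ih (K \ {v}) (T \ {v}) (J.filter fun j => v ∉ D j) hcard
          (Set.diff_subset_diff_left hTK) (fun s hs => hTM s hs.1) ?_ ?_ ?_ ?_ ?_ ?_ hv')
        · rintro y ⟨hy | hy, hyv⟩
          · exact Or.inl ⟨hy, hyv⟩
          · exact Or.inr hy
        · intro j hj y hy
          rw [Finset.mem_filter] at hj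
          exact ⟨hJK j hj.1 hy, fun h => hj.2 (h ▸ hy)⟩
        · exact fun j hj => hconn j (Finset.mem_filter.1 hj).1
        · exact fun j hj j' hj' => hdisj j (Finset.mem_filter.1 hj).1 j' (Finset.mem_filter.1 hj').1
        · exact fun j hj s hs => hadj j (Finset.mem_filter.1 hj).1 s hs.1
        · exact fun j hj => hle j (Finset.mem_filter.1 hj).1
        · intro m hm u hu w hw huw
          by_cases hwm : w ∈ D m
          · exact Or.inl hwm
          rcases hw with hw | hw
          · exact Or.inr ⟨(hcl m hm u hu w (Or.inl (hKR hw.1)) huw).resolve_left hwm, hw.2⟩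
          · have hwT := (hcl m hm u hu w (Or.inr hw) huw).resolve_left hwm
            exact absurd hw (hTM w hwT)
      apply aux_cover
      intro x hx
      have hclA : ∀ u ∈ K ∪ ⋃ m ∈ L, D m, ∀ w ∈ R ∪ ⋃ m ∈ L, D m, G.Adj u w →
          w ∈ K ∪ ⋃ m ∈ L, D m := by
        rintro u (hu | hu) w hw huw
        · rcases hw with hw | hw
          · exact Or.inl (aux_comp_closed G hu hw huw)
          · exact Or.inr hw
        · simp only [Set.mem_iUnion] at hu
          obtain ⟨m, hm, hum⟩ := hu
          rcases hcl m hm u hum w hw huw with h | h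
          · exact Or.inr (Set.mem_biUnion hm h)
          · exact Or.inl (hTK h)
      by_cases hxA : x ∈ K ∪ ⋃ m ∈ L, D m
      · exact ⟨_, hxA, hclA, hKM⟩
      · refine ⟨(R ∪ ⋃ m ∈ L, D m) \ (K ∪ ⋃ m ∈ L, D m), ⟨hx, hxA⟩, ?_, aux_mono G _ ?_ hR⟩
        · rintro u ⟨hu, huA⟩ w hw huw
          exact ⟨hw, fun h => huA (hclA w h u hu huw.symm)⟩
        · rintro y ⟨hy | hy, hyA⟩
          · exact hy
          · exact absurd (Or.inr hy) hyA

/-- with `C 1, …, C ℓ` (`ℓ ≥ λ + η + 2`) pairwise disjoint connected sets of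
treedepth exactly `i ≤ η`, all avoiding `T ∪ H` and with `N_G(C j) ∖ H = T`, let `M` be
the union of all but the first `λ + η + 1` of them. If `S` is an `η`-treedepth deletion
set of `G − M` containing `H`, and either `T ⊆ S` or `S` meets `C 1 ∪ ⋯ ∪ C (λ+η+1)` in
at most `λ` vertices, then `S` is an `η`-treedepth deletion set of `G`. -/
theorem stmt8 {V : Type*} [Fintype V] (η lam i : ℕ) (hη : 1 ≤ η) (hi : i ≤ η)
    (G : SimpleGraph V) (H T : Set V) (hTH : T ⊆ Hᶜ)
    (ℓ : ℕ) (hℓ : lam + η + 2 ≤ ℓ) (C : ℕ → Set V)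
    (hdisj : ∀ j j', 1 ≤ j → j ≤ ℓ → 1 ≤ j' → j' ≤ ℓ → j ≠ j' → Disjoint (C j) (C j'))
    (hsub : ∀ j, 1 ≤ j → j ≤ ℓ → C j ⊆ (T ∪ H)ᶜ)
    (hconn : ∀ j, 1 ≤ j → j ≤ ℓ → (G.induce (C j)).Connected)
    (hnb : ∀ j, 1 ≤ j → j ≤ ℓ → nbhd G (C j) \ H = T)
    (htd : ∀ j, 1 ≤ j → j ≤ ℓ → td G (C j) = i)
    (S : Set V)
    (hSM : S ⊆ (⋃ j ∈ Set.Icc (lam + η + 2) ℓ, C j)ᶜ)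
    (hS : td G ((⋃ j ∈ Set.Icc (lam + η + 2) ℓ, C j)ᶜ \ S) ≤ η)
    (hHS : H ⊆ S)
    (hcond : T ⊆ S ∨ (S ∩ ⋃ j ∈ Set.Icc 1 (lam + η + 1), C j).ncard ≤ lam) :
    IsTDS G η S := by
  classical
  have hTM : ∀ t ∈ T, t ∉ ⋃ j ∈ Set.Icc (lam + η + 2) ℓ, C j := by
    intro t ht h
    simp only [Set.mem_iUnion] at h
    obtain ⟨m, hm, htm⟩ := h
    exact hsub m (by have := hm.1; omega) hm.2 htm (Or.inl ht)
  have hun : Sᶜ = ((⋃ j ∈ Set.Icc (lam + η + 2) ℓ, C j)ᶜ \ S) ∪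
      ⋃ j ∈ Set.Icc (lam + η + 2) ℓ, C j := by
    ext y
    have := @hSM y
    simp only [Set.mem_compl_iff, Set.mem_union, Set.mem_diff] at this ⊢
    tauto
  have hcl : ∀ m ∈ Set.Icc (lam + η + 2) ℓ, ∀ u ∈ C m, ∀ w ∈ Sᶜ, G.Adj u w →
      w ∈ C m ∨ w ∈ T \ S := by
    intro m hm u hu w hw huw
    by_cases hwm : w ∈ C m
    · exact Or.inl hwm
    · refine Or.inr ⟨?_, hw⟩
      rw [← hnb m (by have := hm.1; omega) hm.2]
      exact ⟨⟨hwm, u, hu, huw⟩, fun h => hw (hHS h)⟩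
  rw [aux_td_le] at hS
  rw [IsTDS, aux_td_le]
  rcases hcond with hTS | hc
  · rw [hun] at hcl ⊢
    refine aux_sep G η _ C _ hS ?_ ?_
    · intro m hm
      rw [← aux_td_le, htd m (by have := hm.1; omega) hm.2]
      exact hi
    · intro m hm u hu w hw huw
      exact (hcl m hm u hu w hw huw).resolve_right fun h => h.2 (hTS h.1)
  · have hJmem : ∀ j ∈ (Finset.Icc 1 (lam + η + 1)).filter (fun j => Disjoint (C j) S),
        1 ≤ j ∧ j ≤ ℓ ∧ j ≤ lam + η + 1 ∧ Disjoint (C j) S := by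
      intro j hj
      rw [Finset.mem_filter, Finset.mem_Icc] at hj
      exact ⟨hj.1.1, by omega, hj.1.2, hj.2⟩
    have hcard : η + 1 ≤ ((Finset.Icc 1 (lam + η + 1)).filter (fun j => Disjoint (C j) S)).card := by
      have h1 := Finset.card_filter_add_card_filter_not (s := Finset.Icc 1 (lam + η + 1))
        (fun j => Disjoint (C j) S)
      rw [Nat.card_Icc] at h1
      have h2 : ((Finset.Icc 1 (lam + η + 1)).filter (fun j => ¬ Disjoint (C j) S)).card ≤ lam := by
        refine le_trans ?_ hc
        have hex : ∀ j, ∃ y, ¬ Disjoint (C j) S → y ∈ C j ∧ y ∈ S := by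
          intro j
          by_cases hj : Disjoint (C j) S
          · obtain ⟨⟨x, _⟩⟩ := (hconn 1 le_rfl (by omega)).nonempty
            exact ⟨x, fun h => absurd hj h⟩
          · obtain ⟨y, hy⟩ := Set.not_disjoint_iff.1 hj
            exact ⟨y, fun _ => hy⟩
        choose f hf using hex
        rw [← Set.ncard_coe_finset]
        refine Set.ncard_le_ncard_of_injOn f ?_ ?_ (Set.toFinite _)
        · intro j hj
          rw [Finset.mem_coe, Finset.mem_filter, Finset.mem_Icc] at hj
          exact ⟨(hf j hj.2).2, Set.mem_biUnion (show j ∈ Set.Icc 1 (lam + η + 1) from hj.1)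
            (hf j hj.2).1⟩
        · intro a ha b hb hab
          rw [Finset.mem_coe, Finset.mem_filter, Finset.mem_Icc] at ha hb
          by_contra hne
          refine Set.disjoint_left.1 (hdisj a b ha.1.1 (by omega) hb.1.1 (by omega) hne)
            (hf a ha.2).1 ?_
          rw [hab]
          exact (hf b hb.2).1
      omega
    rw [hun] at hcl ⊢
    refine aux_main G C _ η _ (T \ S) _ hcard ?_ (fun t ht => hTM t ht.1) ?_ ?_ ?_ ?_ ?_ hcl hS
    · exact fun t ht => ⟨hTM t ht.1, ht.2⟩
    · intro j hj y hy
      obtain ⟨h1, h2, h3, h4⟩ := hJmem j hj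
      refine ⟨fun h => ?_, Set.disjoint_left.1 h4 hy⟩
      simp only [Set.mem_iUnion] at h
      obtain ⟨m, hm, hym⟩ := h
      have := hm.1
      exact Set.disjoint_left.1 (hdisj j m h1 h2 (by omega) hm.2 (by omega)) hy hym
    · exact fun j hj => hconn j (hJmem j hj).1 (hJmem j hj).2.1
    · exact fun j hj j' hj' => hdisj j j' (hJmem j hj).1 (hJmem j hj).2.1
        (hJmem j' hj').1 (hJmem j' hj').2.1
    · intro j hj t ht
      have h := ht.1
      rw [← hnb j (hJmem j hj).1 (hJmem j hj).2.1] at h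
      exact h.1.2
    · intro j hj m hm p hp
      rw [← aux_td_le, htd j (hJmem j hj).1 (hJmem j hj).2.1] at hp
      rw [← aux_td_le, htd m (by have := hm.1; omega) hm.2]
      exact hp
end
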